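/- Let μ ∈ ℂ with μ ∉ M/2 + ℤ, let ν ∈ ℤ with ν ≡ M (mod 2), and let z_1,…,z_n be pairwise distinct nonzero complex numbers. Then for every s = 1,…,n and every v ∈ V[ν]: A(μ + ν/2 − 1)·K_s(z,μ)·v = K_s(z,−μ)·A(μ + ν/2 − 1)·v. -/

import Mathlib

open Complex Finset

namespace Paper

noncomputable section

variable {n : ℕ}

/-- The index set of the natural basis of `V = V_{m 0} ⊗ ⋯ ⊗ V_{m (n-1)}`:
the basis vector `v_{i_1} ⊗ ⋯ ⊗ v_{i_n}` corresponds to the index `(i_1,…,i_n)`. -/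
abbrev Idx (m : Fin n → ℕ) := ∀ s : Fin n, Fin (m s + 1)

/-- The tensor product `V = V_{m 0} ⊗ ⋯ ⊗ V_{m (n-1)}` realized concretely as the space of
ℂ-valued functions on the index set of its natural basis. -/
abbrev TV (m : Fin n → ℕ) := Idx m → ℂ

/-- The linear operator `f ↦ (i ↦ c i * f (g i))`; all the basic operators below are of
this form. -/
def mulShift {ι : Type*} (c : ι → ℂ) (g : ι → ι) : Module.End ℂ (ι → ℂ) where
  toFun f i := c i * f (g i)
  map_add' f h := by funext i; simp [mul_add]
  map_smul' a f := by
    funext i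
    simp only [Pi.smul_apply, smul_eq_mul, RingHom.id_apply]
    ring

variable (m : Fin n → ℕ)

/-- `e11` acting in the `s`-th tensor factor: `e11 · v_k = ((m-2k)/2) v_k`. -/
def E11 (s : Fin n) : Module.End ℂ (TV m) :=
  mulShift (fun idx => ((m s : ℂ) - 2 * ((idx s : ℕ) : ℂ)) / 2) id

/-- `e22` acting in the `s`-th tensor factor: `e22 · v_k = -((m-2k)/2) v_k`. -/
def E22 (s : Fin n) : Module.End ℂ (TV m) :=
  mulShift (fun idx => -(((m s : ℂ) - 2 * ((idx s : ℕ) : ℂ)) / 2)) id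

/-- `e21` acting in the `s`-th tensor factor: `e21 · v_k = (k+1) v_{k+1}`. -/
def E21 (s : Fin n) : Module.End ℂ (TV m) :=
  mulShift (fun idx => ((idx s : ℕ) : ℂ)) (fun idx => Function.update idx s (idx s - 1))

/-- `e12` acting in the `s`-th tensor factor: `e12 · v_k = (m-k+1) v_{k-1}`. -/
def E12 (s : Fin n) : Module.End ℂ (TV m) :=
  mulShift (fun idx => (m s : ℂ) - ((idx s : ℕ) : ℂ)) (fun idx => Function.update idx s (idx s + 1))

/-- The diagonal action `e11 = Σ_s e11^{(s)}` on the tensor product. -/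
def e11T : Module.End ℂ (TV m) := ∑ s, E11 m s
def e22T : Module.End ℂ (TV m) := ∑ s, E22 m s
def e21T : Module.End ℂ (TV m) := ∑ s, E21 m s
def e12T : Module.End ℂ (TV m) := ∑ s, E12 m s

/-- `v ∈ V[ν]`, i.e. `(e11 - e22) v = ν v`. -/
def inWt (ν : ℤ) (v : TV m) : Prop := (e11T m - e22T m) v = ((ν : ℤ) : ℂ) • v

/-- The Weyl involution `σ`, acting by `σ v_k = (-1)^k v_{m-k}` in each factor. -/
def sigmaOp : Module.End ℂ (TV m) :=
  mulShift (fun idx => ∏ s, (-1 : ℂ) ^ (m s - (idx s : ℕ))) (fun idx s => (idx s).rev)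

/-- The weight of a basis vector: `wt(i) = Σ_s (m_s - 2 i_s)`. -/
def wt (idx : Idx m) : ℤ := ∑ s, ((m s : ℤ) - 2 * ((idx s : ℕ) : ℤ))

/-- The operator `p(κ) = Σ_{k ≥ 0} e21^k e12^k (1/k!) Π_{j=0}^{k-1} (κ + e22 - e11 - j)^{-1}`.
The operator `e22 - e11` is diagonal in the chosen basis with eigenvalue `-wt(idx)` on the
basis vector labelled by `idx`, so the (partial) inverses `(κ + e22 - e11 - j)^{-1}` are the
diagonal operators with entries `(κ - wt(idx) - j)⁻¹`.  The sum is finite on `V` since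
`e12` is nilpotent:  `e12^k = 0` for `k > M = Σ_s m_s`. -/
def pOp (κ : ℂ) : Module.End ℂ (TV m) :=
  ∑ k ∈ Finset.range ((∑ s, m s) + 1),
    (e21T m) ^ k * (e12T m) ^ k *
      mulShift (fun idx => ((k.factorial : ℂ))⁻¹ *
        ∏ j ∈ Finset.range k, (κ - ((wt m idx : ℤ) : ℂ) - (j : ℂ))⁻¹) id

/-- The operator `𝒜(κ) = σ ∘ p(κ)`. -/
def Aop (κ : ℂ) : Module.End ℂ (TV m) := sigmaOp m * pOp m κ

/-- `Ω₀^{(s,t)} = e11^{(s)} e11^{(t)} + e22^{(s)} e22^{(t)}`. -/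
def Om0 (s t : Fin n) : Module.End ℂ (TV m) := E11 m s * E11 m t + E22 m s * E22 m t

/-- `Ω₁₂^{(s,t)} = e12^{(s)} e21^{(t)}`. -/
def Om12 (s t : Fin n) : Module.End ℂ (TV m) := E12 m s * E21 m t

/-- `Ω₂₁^{(s,t)} = e21^{(s)} e12^{(t)}`. -/
def Om21 (s t : Fin n) : Module.End ℂ (TV m) := E21 m s * E12 m t

/-- The trigonometric r-matrix `r^{(s,t)}(x) = (Ω₊ x + Ω₋)/(x-1)` acting in the `s`-th and
`t`-th tensor factors, where `Ω₊ = ½Ω₀ + Ω₁₂` and `Ω₋ = ½Ω₀ + Ω₂₁`. -/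
def rOp (s t : Fin n) (x : ℂ) : Module.End ℂ (TV m) :=
  (x - 1)⁻¹ • (x • ((2 : ℂ)⁻¹ • Om0 m s t + Om12 m s t) + ((2 : ℂ)⁻¹ • Om0 m s t + Om21 m s t))

/-- The trigonometric Gaudin operators
`K_s(z,μ) = (μ/2)(e11-e22)^{(s)} + Σ_{t ≠ s} r^{(s,t)}(z_s/z_t)`. -/
def Kop (z : Fin n → ℂ) (μ : ℂ) (s : Fin n) : Module.End ℂ (TV m) :=
  (μ / 2) • (E11 m s - E22 m s) + ∑ t ∈ Finset.univ.erase s, rOp m s t (z s / z t)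

/-- The matrix entry `M₁₁(x) = 2πi Σ_s (1-x/z_s)⁻¹ e11^{(s)} - πi e11`. -/
def M11 (z : Fin n → ℂ) (x : ℂ) : Module.End ℂ (TV m) :=
  (2 * (Real.pi : ℂ) * I) • (∑ s, (1 - x / z s)⁻¹ • E11 m s) - ((Real.pi : ℂ) * I) • e11T m

/-- `M₁₂(x) = 2πi Σ_s (1-x/z_s)⁻¹ e21^{(s)} - 2πi e21`. -/
def M12 (z : Fin n → ℂ) (x : ℂ) : Module.End ℂ (TV m) :=
  (2 * (Real.pi : ℂ) * I) • (∑ s, (1 - x / z s)⁻¹ • E21 m s) -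
    (2 * (Real.pi : ℂ) * I) • e21T m

/-- `M₂₁(x) = 2πi Σ_s (1-x/z_s)⁻¹ e12^{(s)}`. -/
def M21 (z : Fin n → ℂ) (x : ℂ) : Module.End ℂ (TV m) :=
  (2 * (Real.pi : ℂ) * I) • (∑ s, (1 - x / z s)⁻¹ • E12 m s)

/-- `M₂₂(x) = 2πi Σ_s (1-x/z_s)⁻¹ e22^{(s)} - πi e22`. -/
def M22 (z : Fin n → ℂ) (x : ℂ) : Module.End ℂ (TV m) :=
  (2 * (Real.pi : ℂ) * I) • (∑ s, (1 - x / z s)⁻¹ • E22 m s) - ((Real.pi : ℂ) * I) • e22T m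

/-- The derivative `(dM₂₂/dx)(x) = 2πi Σ_s z_s⁻¹ (1-x/z_s)⁻² e22^{(s)}`. -/
def M22d (z : Fin n → ℂ) (x : ℂ) : Module.End ℂ (TV m) :=
  (2 * (Real.pi : ℂ) * I) • (∑ s, ((z s)⁻¹ * ((1 - x / z s)⁻¹) ^ 2) • E22 m s)

/-- The coefficient `D₂(x)` of the universal differential operator
`𝒟 = cdet [[∂_u - πiμ + M₁₁, M₁₂],[M₂₁, ∂_u + πiμ + M₂₂]] = ∂_u² + D₁(x) ∂_u + D₂(x)`
(where `x = e^{-2πiu}`, `∂_u = -2πi x ∂_x`), namely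
`D₂(x) = (-πiμ + M₁₁(x)) ∘ (πiμ + M₂₂(x)) - 2πi x (dM₂₂/dx)(x) - M₂₁(x) ∘ M₁₂(x)`. -/
def D2 (z : Fin n → ℂ) (μ : ℂ) (x : ℂ) : Module.End ℂ (TV m) :=
  (-(((Real.pi : ℂ) * I * μ)) • (1 : Module.End ℂ (TV m)) + M11 m z x) *
      ((((Real.pi : ℂ) * I * μ)) • (1 : Module.End ℂ (TV m)) + M22 m z x)
    - (2 * (Real.pi : ℂ) * I * x) • M22d m z x
    - M21 m z x * M12 m z x

/-- The Bethe ansatz equations for the triple `(z; μ; V[ν])`, `ν = M - 2m'`:  `t` is a tuple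
of pairwise distinct complex numbers, each nonzero and distinct from every `z_s`, with
`(1 - μ + ν/2)/t_i + Σ_{j≠i} 2/(t_i - t_j) - Σ_s m_s/(t_i - z_s) = 0` for all `i`. -/
def BAE (z : Fin n → ℂ) (μ : ℂ) {m' : ℕ} (t : Fin m' → ℂ) : Prop :=
  Function.Injective t ∧ (∀ i, t i ≠ 0) ∧ (∀ i s, t i ≠ z s) ∧
    ∀ i, (1 - μ + ((∑ s, (m s : ℂ)) - 2 * (m' : ℂ)) / 2) / t i
        + (∑ j ∈ Finset.univ.erase i, 2 / (t i - t j))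
        - ∑ s, (m s : ℂ) / (t i - z s) = 0

/-- The partial sum `ℓ_1 + ⋯ + ℓ_{s-1}` (0-based). -/
def pref (ℓv : Idx m) (s : Fin n) : ℕ :=
  ∑ u ∈ Finset.univ.filter (fun u => u < s), (ℓv u : ℕ)

/-- Extension of a tuple `t : Fin m' → ℂ` to a function on `ℕ` (by zero). -/
def extt {m' : ℕ} (t : Fin m' → ℂ) : ℕ → ℂ := fun i => if h : i < m' then t ⟨i, h⟩ else 0

/-- The coordinate `ω_ℓ(t,z) = Σ_{ρ ∈ S_{m'}} Π_{s=1}^n Π_{i=ℓ_1+⋯+ℓ_{s-1}+1}^{ℓ_1+⋯+ℓ_s}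
(t_{ρ(i)} - z_s)⁻¹` of the weight function. -/
def omegaCoeff (z : Fin n → ℂ) {m' : ℕ} (t : Fin m' → ℂ) (ℓv : Idx m) : ℂ :=
  ∑ ρ : Equiv.Perm (Fin m'), ∏ s : Fin n,
    ∏ i ∈ Finset.Ico (pref m ℓv s) (pref m ℓv s + (ℓv s : ℕ)), (extt (t ∘ ρ) i - z s)⁻¹

/-- The Bethe vector (weight function) `ω(t,z) = Σ_{ℓ ∈ C} ω_ℓ(t,z) v_ℓ ∈ V[M - 2m']`. -/
def betheVec (z : Fin n → ℂ) {m' : ℕ} (t : Fin m' → ℂ) : TV m :=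
  fun ℓv => if (∑ s, ((ℓv s : ℕ))) = m' then omegaCoeff m z t ℓv else 0

/-- The eigenvalue `k_s(t,z,μ) = (m_s/2)[(μ - ν/2 + m_s/2) + Σ_{p≠s} m_p z_s/(z_s-z_p)
+ 2 Σ_i z_s/(t_i - z_s)]`, with `ν = M - 2m'`. -/
def kEig (z : Fin n → ℂ) (μ : ℂ) {m' : ℕ} (t : Fin m' → ℂ) (s : Fin n) : ℂ :=
  ((m s : ℂ) / 2) * ((μ - ((∑ u, (m u : ℂ)) - 2 * (m' : ℂ)) / 2 + (m s : ℂ) / 2)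
    + (∑ p ∈ Finset.univ.erase s, (m p : ℂ) * z s / (z s - z p))
    + 2 * ∑ i, z s / (t i - z s))

/-- The scalar eigenvalue function `E₂(x, t, z, μ)` of `D₂(x)` on the Bethe vector, i.e.
the coefficient of the fundamental differential operator `ℰ = ∂_u² + E₂(x)`. -/
def E2fun (z : Fin n → ℂ) (μ : ℂ) {m' : ℕ} (t : Fin m' → ℂ) (x : ℂ) : ℂ :=
  (2 * (Real.pi : ℂ) * I) ^ 2 *
    (-(μ + ((∑ u, (m u : ℂ)) - 2 * (m' : ℂ)) / 2) ^ 2 / 4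
      + ∑ s, (((m s : ℂ) * ((m s : ℂ) + 2) / 4 + kEig m z μ t s) / (1 - x / z s)
          - ((m s : ℂ) * ((m s : ℂ) + 2) / 4) / (1 - x / z s) ^ 2))

/-!
Write `E, F, H` for the diagonal `sl₂`-triple `e12, e21, e11 - e22`, and `e_s, f_s, h_s` for the
triple of the `s`-th factor. Splitting the `r`-matrix into its symmetric and antisymmetric parts
gives `K_s(z,μ) = ½ (μ h_s + D_s) + S_s`, where `S_s` is a combination of Casimir tensors, hence
commutes with `E, F, H`, and `D_s = F e_s - f_s E`.

With `L_k = F^k E^k`, `G_k = F^k D_s E^k` and `C = H h_s + 2 (E f_s + F e_s)`, the operator `D_s`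
equals both `-½ C + 2 F e_s + ½ (H + 2) h_s` and `½ C - 2 f_s E - ½ (H + 2) h_s`. Using the first
form to the right of `L_{k+1}` and the second to its left, the Casimir `C` drops out, and
`L_{k+1} (μ h_s + D_s) - (μ h_s - D_s) L_{k+1} = 2 G_{k+1} + (k+1) G_k (H + 2 (k+1) - 2 μ)`.
On `V[ν]`, weighting by the coefficients `c_k` of `p(μ + ν/2 - 1)` makes the sum over `k ≤ N`
telescope to `2 c_N G_N`, which vanishes for `N = M` by nilpotency. So `p` turns `μ h_s + D_s` into
`μ h_s - D_s`, and `σ`, which negates `h_s` and `D_s` and fixes `S_s`, turns the latter into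
`-μ h_s + D_s`.
-/

attribute [local instance] LieRing.ofAssociativeRing

section Ring
variable {A : Type*} [Ring A]

lemma lie_mul_eq (a b c : A) : ⁅a, b * c⁆ = ⁅a, b⁆ * c + b * ⁅a, c⁆ := by
  simp only [Ring.lie_def]; noncomm_ring

lemma mul_lie_eq (a b c : A) : ⁅a * b, c⁆ = a * ⁅b, c⁆ + ⁅a, c⁆ * b := by
  simp only [Ring.lie_def]; noncomm_ring

lemma pow_succ_lie {a x : A} (h : Commute a ⁅a, x⁆) (k : ℕ) :
    ⁅a ^ (k + 1), x⁆ = (k + 1) • (⁅a, x⁆ * a ^ k) := by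
  induction k with
  | zero => simp
  | succ k ih =>
    calc ⁅a ^ (k + 2), x⁆ = a * ⁅a ^ (k + 1), x⁆ + ⁅a, x⁆ * a ^ (k + 1) := by
          simp only [Ring.lie_def, pow_succ' a (k + 1)]; noncomm_ring
      _ = (k + 2) • (⁅a, x⁆ * a ^ (k + 1)) := by
          rw [ih, mul_smul_comm, ← mul_assoc, h.eq, mul_assoc, ← pow_succ']
          module

lemma lie_mul_eq_zsmul {a x y : A} {c d : ℤ} (hx : ⁅a, x⁆ = c • x) (hy : ⁅a, y⁆ = d • y) :
    ⁅a, x * y⁆ = (c + d) • (x * y) := by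
  rw [lie_mul_eq, hx, hy, smul_mul_assoc, mul_smul_comm, add_smul]

lemma lie_pow_eq_zsmul {a x : A} {c : ℤ} (hx : ⁅a, x⁆ = c • x) (k : ℕ) :
    ⁅a, x ^ k⁆ = (k * c) • x ^ k := by
  induction k with
  | zero => simp [Ring.lie_def]
  | succ k ih => rw [pow_succ, lie_mul_eq_zsmul ih hx, Nat.cast_succ, add_one_mul]

lemma sum_pow_eq_zero {ι : Type*} {x : ι → A} {d : ι → ℕ}
    (hcomm : Pairwise fun i j => Commute (x i) (x j))
    (hx : ∀ i, x i ^ (d i + 1) = 0) (s : Finset ι) : (∑ i ∈ s, x i) ^ (∑ i ∈ s, d i + 1) = 0 := by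
  classical
  induction s using Finset.induction_on with
  | empty => simp
  | insert i s hi ih =>
    have hcomm_sum : Commute (x i) (∑ j ∈ s, x j) :=
      Commute.sum_right _ _ _ fun j hj => hcomm (ne_of_mem_of_not_mem hj hi).symm
    rw [sum_insert hi, sum_insert hi]
    exact hcomm_sum.add_pow_eq_zero_of_add_le_succ_of_pow_eq_zero (hx i) ih (by omega)

lemma semiconjBy_sum_right {ι : Type*} {a : A} {x y : ι → A}
    (h : ∀ i, SemiconjBy a (x i) (y i)) (s : Finset ι) :
    SemiconjBy a (∑ i ∈ s, x i) (∑ i ∈ s, y i) := by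
  rw [SemiconjBy, mul_sum, sum_mul]
  exact sum_congr rfl fun i _ => h i

/-- The antisymmetric combination `F e - f E` of an `sl₂`-pair `E, F` with components `e, f` of a
vector operator. For the diagonal action and one tensor factor it is twice the antisymmetric part of
the sum of `r`-matrices in the Gaudin operator. -/
def wedge (E F e f : A) : A := F * e - f * E

/-- The triple `(e, h, f)` transforms under `⁅E, ·⁆` and `⁅F, ·⁆` like the adjoint representation of
`sl₂`. In particular `IsVectorOperator E F E F H` says that `E, F, H` satisfy the relations of
`sl₂`; unlike `IsSl2Triple` this allows `H = 0`. -/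
structure IsVectorOperator (E F e f h : A) : Prop where
  lie_E_e : ⁅E, e⁆ = 0
  lie_E_f : ⁅E, f⁆ = h
  lie_E_h : ⁅E, h⁆ = -(2 • e)
  lie_F_e : ⁅F, e⁆ = -h
  lie_F_f : ⁅F, f⁆ = 0
  lie_F_h : ⁅F, h⁆ = 2 • f

/-- Twice the polarised Casimir element `½ h h' + e f' + f e'` of two vector operators. -/
def casimir (e f h e' f' h' : A) : A := h * h' + 2 • (e * f' + f * e')

section Involution
variable {a E F e f h e' f' h' : A}

lemma semiconjBy_wedge (hE : SemiconjBy a E (-F)) (hF : SemiconjBy a F (-E))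
    (he : SemiconjBy a e (-f)) (hf : SemiconjBy a f (-e)) :
    SemiconjBy a (wedge E F e f) (wedge F E f e) := by
  have hFe := hF.mul_right he
  have hfE := hf.mul_right hE
  rw [neg_mul_neg] at hFe hfE
  exact hFe.sub_right hfE

lemma commute_casimir (he : SemiconjBy a e (-f)) (hf : SemiconjBy a f (-e))
    (hh : SemiconjBy a h (-h)) (he' : SemiconjBy a e' (-f')) (hf' : SemiconjBy a f' (-e'))
    (hh' : SemiconjBy a h' (-h')) : Commute a (casimir e f h e' f' h') := by
  have hsemi := (hh.mul_right hh').add_right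
    (((he.mul_right hf').add_right (hf.mul_right he')).smul_right 2)
  rwa [neg_mul_neg, neg_mul_neg, neg_mul_neg, add_comm (f * e')] at hsemi

end Involution

namespace IsVectorOperator
variable {E F H e f h e' f' h' : A}

lemma of_sl2 (hef : ⁅e, f⁆ = h) (hhe : ⁅h, e⁆ = 2 • e) (hhf : ⁅h, f⁆ = -(2 • f)) :
    IsVectorOperator e f e f h where
  lie_E_e := lie_self e
  lie_E_f := hef
  lie_E_h := by rw [← lie_skew, hhe]
  lie_F_e := by rw [← lie_skew, hef]
  lie_F_f := lie_self f
  lie_F_h := by rw [← lie_skew, hhf, neg_neg]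

lemma sum {ι : Type*} {s : Finset ι} {e f h : ι → A}
    (hs : ∀ i ∈ s, IsVectorOperator E F (e i) (f i) (h i)) :
    IsVectorOperator E F (∑ i ∈ s, e i) (∑ i ∈ s, f i) (∑ i ∈ s, h i) where
  lie_E_e := by rw [lie_sum, sum_eq_zero fun i hi => (hs i hi).lie_E_e]
  lie_E_f := by rw [lie_sum, sum_congr rfl fun i hi => (hs i hi).lie_E_f]
  lie_E_h := by
    rw [lie_sum, sum_congr rfl fun i hi => (hs i hi).lie_E_h, sum_neg_distrib, smul_sum]
  lie_F_e := by rw [lie_sum, sum_congr rfl fun i hi => (hs i hi).lie_F_e, sum_neg_distrib]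
  lie_F_f := by rw [lie_sum, sum_eq_zero fun i hi => (hs i hi).lie_F_f]
  lie_F_h := by rw [lie_sum, sum_congr rfl fun i hi => (hs i hi).lie_F_h, smul_sum]

lemma casimir_commute_left (ht : IsVectorOperator E F e f h) (ht' : IsVectorOperator E F e' f' h') :
    Commute E (casimir e f h e' f' h') := by
  rw [commute_iff_lie_eq, casimir, lie_add, lie_nsmul, lie_add]
  simp only [lie_mul_eq, ht.lie_E_e, ht.lie_E_f, ht.lie_E_h, ht'.lie_E_e, ht'.lie_E_f, ht'.lie_E_h]
  noncomm_ring

lemma swap (ht : IsVectorOperator E F e f h) : IsVectorOperator F E f e (-h) where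
  lie_E_e := ht.lie_F_f
  lie_E_f := ht.lie_F_e
  lie_E_h := by rw [lie_neg, ht.lie_F_h]
  lie_F_e := by rw [ht.lie_E_f, neg_neg]
  lie_F_f := ht.lie_E_e
  lie_F_h := by rw [lie_neg, ht.lie_E_h, neg_neg]

lemma casimir_commute_right (ht : IsVectorOperator E F e f h)
    (ht' : IsVectorOperator E F e' f' h') :
    Commute F (casimir e f h e' f' h') := by
  have hswap : casimir f e (-h) f' e' (-h') = casimir e f h e' f' h' := by
    rw [casimir, casimir, neg_mul_neg, add_comm (f * e')]
  exact hswap ▸ ht.swap.casimir_commute_left ht'.swap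

lemma wedge_swap (ht : IsVectorOperator E F e f h) : wedge F E f e = -wedge E F e f := by
  have hEf : E * f = f * E + h := sub_eq_iff_eq_add'.mp ht.lie_E_f
  have hFe : F * e = e * F + -h := sub_eq_iff_eq_add'.mp ht.lie_F_e
  rw [wedge, wedge, hEf, hFe]
  abel

lemma two_nsmul_wedge_eq_left (ht : IsVectorOperator E F e f h) :
    2 • wedge E F e f = casimir E F H e f h - (H + 2) * h - 4 • (f * E) := by
  have hEf : E * f = f * E + h := sub_eq_iff_eq_add'.mp ht.lie_E_f
  rw [wedge, casimir, hEf]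
  noncomm_ring

lemma two_nsmul_wedge_eq_right (ht : IsVectorOperator E F e f h) :
    2 • wedge E F e f = 4 • (F * e) + (H + 2) * h - casimir E F H e f h := by
  have hEf : E * f = f * E + h := sub_eq_iff_eq_add'.mp ht.lie_E_f
  rw [wedge, casimir, hEf]
  noncomm_ring

lemma lie_H_e (ht : IsVectorOperator E F e f h) (hT : IsVectorOperator E F E F H) :
    ⁅H, e⁆ = (2 : ℤ) • e := by
  rw [← hT.lie_E_f, lie_lie, ht.lie_E_e, ht.lie_F_e, lie_neg, lie_zero, ht.lie_E_h]
  module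

lemma lie_H_f (ht : IsVectorOperator E F e f h) (hT : IsVectorOperator E F E F H) :
    ⁅H, f⁆ = (-2 : ℤ) • f := by
  rw [← hT.lie_E_f, lie_lie, ht.lie_E_f, ht.lie_F_f, lie_zero, ht.lie_F_h]
  module

lemma commute_H_h (ht : IsVectorOperator E F e f h) (hT : IsVectorOperator E F E F H) :
    Commute H h := by
  rw [commute_iff_lie_eq, ← hT.lie_E_f, lie_lie, ht.lie_E_h, ht.lie_F_h, lie_nsmul, lie_neg,
    lie_nsmul, ht.lie_E_f, ht.lie_F_e]
  abel

lemma commute_H_wedge (ht : IsVectorOperator E F e f h) (hT : IsVectorOperator E F E F H) :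
    Commute H (wedge E F e f) := by
  have hFe := lie_mul_eq_zsmul (hT.lie_H_f hT) (ht.lie_H_e hT)
  have hfE := lie_mul_eq_zsmul (ht.lie_H_f hT) (hT.lie_H_e hT)
  rw [commute_iff_lie_eq, wedge, lie_sub, hFe, hfE]
  module

lemma commute_H_pow_mul_mul_pow (hT : IsVectorOperator E F E F H) {x : A} (hx : Commute H x)
    (k : ℕ) :
    Commute H (F ^ k * x * E ^ k) := by
  have hx0 : ⁅H, x⁆ = (0 : ℤ) • x := by rw [commute_iff_lie_eq.mp hx, zero_smul]
  have h0 := lie_mul_eq_zsmul (lie_mul_eq_zsmul (lie_pow_eq_zsmul (hT.lie_H_f hT) k) hx0)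
    (lie_pow_eq_zsmul (hT.lie_H_e hT) k)
  rw [commute_iff_lie_eq, h0]
  module

lemma pow_succ_lie_F (hT : IsVectorOperator E F E F H) (k : ℕ) :
    ⁅E ^ (k + 1), F⁆ = (k + 1) • (E ^ k * (H + (k : A))) := by
  induction k with
  | zero => simp [hT.lie_E_f]
  | succ k ih =>
    have hweight : H * E ^ (k + 1) = E ^ (k + 1) * H + (2 * (k + 1)) • E ^ (k + 1) := by
      rw [← sub_eq_iff_eq_add', ← Ring.lie_def, lie_pow_eq_zsmul (hT.lie_H_e hT)]
      module
    calc ⁅E ^ (k + 2), F⁆ = E * ⁅E ^ (k + 1), F⁆ + ⁅E, F⁆ * E ^ (k + 1) := by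
          simp only [Ring.lie_def, pow_succ' E (k + 1)]; noncomm_ring
      _ = (k + 2) • (E ^ (k + 1) * (H + ((k + 1 : ℕ) : A))) := by
          rw [ih, hT.lie_E_f, hweight, mul_smul_comm, ← mul_assoc, ← pow_succ']
          simp only [mul_add, ← nsmul_eq_mul']
          module

lemma lie_pow_succ_F (hT : IsVectorOperator E F E F H) (k : ℕ) :
    ⁅E, F ^ (k + 1)⁆ = (k + 1) • (F ^ k * (H - (k : A))) := by
  rw [← lie_skew, hT.swap.pow_succ_lie_F, ← smul_neg, ← mul_neg]
  abel_nf

lemma pow_mul_pow_lie_h (ht : IsVectorOperator E F e f h) (k : ℕ) :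
    ⁅F ^ (k + 1) * E ^ (k + 1), h⁆ = -((2 * (k + 1)) • (F ^ k * wedge E F e f * E ^ k)) := by
  have hE : ⁅E ^ (k + 1), h⁆ = (k + 1) • (-(2 • e) * E ^ k) := by
    rw [pow_succ_lie, ht.lie_E_h]
    rw [ht.lie_E_h]
    exact ((commute_iff_lie_eq.mpr ht.lie_E_e).smul_right 2).neg_right
  have hfF : f * F ^ k = F ^ k * f := ((commute_iff_lie_eq.mpr ht.lie_F_f).pow_left k).eq.symm
  have hF : ⁅F ^ (k + 1), h⁆ = (k + 1) • (2 • (F ^ k * f)) := by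
    rw [pow_succ_lie, ht.lie_F_h, smul_mul_assoc, hfF]
    rw [ht.lie_F_h]
    exact (commute_iff_lie_eq.mpr ht.lie_F_f).smul_right 2
  rw [mul_lie_eq, hE, hF, wedge, pow_succ F, pow_succ' E]
  simp only [mul_sub, sub_mul, mul_smul_comm, smul_mul_assoc, neg_mul, mul_neg, mul_assoc]
  module

lemma pow_mul_pow_mul_F_mul_e (ht : IsVectorOperator E F e f h) (hT : IsVectorOperator E F E F H)
    (k : ℕ) :
    F ^ (k + 1) * E ^ (k + 1) * (F * e)
      = F ^ (k + 2) * e * E ^ (k + 1)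
        + (k + 1) • (F ^ (k + 1) * e * E ^ k * (H + ((k + 2 : ℕ) : A))) := by
  have hEe (j : ℕ) : E ^ j * e = e * E ^ j := (commute_iff_lie_eq.mpr ht.lie_E_e).pow_left j
  have hEF : E ^ (k + 1) * F = F * E ^ (k + 1) + (k + 1) • (E ^ k * (H + (k : A))) :=
    sub_eq_iff_eq_add'.mp (hT.pow_succ_lie_F k)
  have hHe : H * e = e * H + (2 : ℤ) • e := sub_eq_iff_eq_add'.mp (ht.lie_H_e hT)
  have hweight : (H + (k : A)) * e = e * (H + ((k + 2 : ℕ) : A)) := by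
    rw [add_mul, hHe, Nat.cast_comm]
    push_cast
    noncomm_ring
  calc F ^ (k + 1) * E ^ (k + 1) * (F * e) = F ^ (k + 1) * (E ^ (k + 1) * F) * e := by
        simp only [mul_assoc]
    _ = F ^ (k + 2) * (E ^ (k + 1) * e)
          + (k + 1) • (F ^ (k + 1) * (E ^ k * ((H + (k : A)) * e))) := by
        rw [hEF, pow_succ F (k + 1)]
        simp only [mul_add, add_mul, mul_smul_comm, smul_mul_assoc, mul_assoc]
    _ = _ := by
        rw [hweight, hEe, ← mul_assoc (E ^ k), hEe]
        simp only [mul_assoc]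

lemma f_mul_E_mul_pow_mul_pow (ht : IsVectorOperator E F e f h) (hT : IsVectorOperator E F E F H)
    (k : ℕ) :
    f * E * (F ^ (k + 1) * E ^ (k + 1))
      = F ^ (k + 1) * f * E ^ (k + 2)
        + (k + 1) • (F ^ k * f * E ^ (k + 1) * (H + ((k + 2 : ℕ) : A))) := by
  have hfF (j : ℕ) : f * F ^ j = F ^ j * f :=
    ((commute_iff_lie_eq.mpr ht.lie_F_f).pow_left j).eq.symm
  have hEF : E * F ^ (k + 1) = F ^ (k + 1) * E + (k + 1) • (F ^ k * (H - (k : A))) :=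
    sub_eq_iff_eq_add'.mp (hT.lie_pow_succ_F k)
  have hHE : H * E ^ (k + 1) = E ^ (k + 1) * H + (((k + 1 : ℕ) : ℤ) * 2) • E ^ (k + 1) :=
    sub_eq_iff_eq_add'.mp (lie_pow_eq_zsmul (hT.lie_H_e hT) (k + 1))
  have hweight : (H - (k : A)) * E ^ (k + 1) = E ^ (k + 1) * (H + ((k + 2 : ℕ) : A)) := by
    rw [sub_mul, hHE, Nat.cast_comm k (E ^ (k + 1))]
    simp only [mul_add, ← nsmul_eq_mul']
    module
  calc f * E * (F ^ (k + 1) * E ^ (k + 1)) = f * (E * F ^ (k + 1)) * E ^ (k + 1) := by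
        simp only [mul_assoc]
    _ = f * F ^ (k + 1) * E ^ (k + 2)
          + (k + 1) • (f * F ^ k * ((H - (k : A)) * E ^ (k + 1))) := by
        rw [hEF, pow_succ' E (k + 1)]
        simp only [mul_add, add_mul, mul_smul_comm, smul_mul_assoc, mul_assoc]
    _ = _ := by
        rw [hweight, hfF, hfF]
        simp only [mul_assoc]

lemma pow_mul_pow_mul_F_mul_e_sub (ht : IsVectorOperator E F e f h)
    (hT : IsVectorOperator E F E F H) (k : ℕ) :
    F ^ (k + 1) * E ^ (k + 1) * (F * e) - f * E * (F ^ (k + 1) * E ^ (k + 1))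
      = F ^ (k + 1) * wedge E F e f * E ^ (k + 1)
        + (k + 1) • (F ^ k * wedge E F e f * E ^ k * (H + ((k + 2 : ℕ) : A))) := by
  have hG (j : ℕ) : F ^ j * wedge E F e f * E ^ j
      = F ^ (j + 1) * e * E ^ j - F ^ j * f * E ^ (j + 1) := by
    rw [wedge, pow_succ F, pow_succ' E]; noncomm_ring
  rw [ht.pow_mul_pow_mul_F_mul_e hT, ht.f_mul_E_mul_pow_mul_pow hT, hG, hG,
    sub_mul _ _ (H + _), smul_sub]
  abel

lemma two_nsmul_anticommutator_wedge (ht : IsVectorOperator E F e f h)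
    (hT : IsVectorOperator E F E F H) (k : ℕ) :
    2 • (F ^ (k + 1) * E ^ (k + 1) * wedge E F e f + wedge E F e f * (F ^ (k + 1) * E ^ (k + 1)))
      = 2 • (2 • (F ^ (k + 1) * wedge E F e f * E ^ (k + 1))
          + (k + 1) • (F ^ k * wedge E F e f * E ^ k * (H + ((2 * (k + 1) : ℕ) : A)))) := by
  have hHG := (hT.commute_H_pow_mul_mul_pow (ht.commute_H_wedge hT) k).eq
  have hHL := (hT.commute_H_pow_mul_mul_pow (Commute.one_right H) (k + 1)).eq
  rw [mul_one] at hHL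
  have hLC : Commute (F ^ (k + 1) * E ^ (k + 1)) (casimir E F H e f h) :=
    ((hT.casimir_commute_right ht).pow_left _).mul_left ((hT.casimir_commute_left ht).pow_left _)
  have hLh := ht.pow_mul_pow_lie_h k
  have hsub := ht.pow_mul_pow_mul_F_mul_e_sub hT k
  set L := F ^ (k + 1) * E ^ (k + 1)
  set D := wedge E F e f
  set C := casimir E F H e f h
  set G := F ^ k * D * E ^ k
  calc 2 • (L * D + D * L) = L * (2 • D) + (2 • D) * L := by noncomm_ring
    _ = L * (4 • (F * e) + (H + 2) * h - C) + (C - (H + 2) * h - 4 • (f * E)) * L := by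
        rw [← ht.two_nsmul_wedge_eq_right, ← ht.two_nsmul_wedge_eq_left]
    _ = 4 • (L * (F * e) - f * E * L) + (H + 2) * ⁅L, h⁆ := by
        linear_combination (norm := (simp only [Ring.lie_def]; noncomm_ring)) -hLC.eq - hHL * h
    _ = _ := by
        rw [hsub, hLh, mul_neg, mul_smul_comm, add_mul, hHG, two_mul G]
        simp only [mul_add, ← nsmul_eq_mul']
        module

end IsVectorOperator
end Ring

section WeylSeries

/-- The coefficient `(1/k!) ∏_{j < k} (l - j)⁻¹` of `F ^ k * E ^ k` in `p`. It is meaningful only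
when `l ≠ 0, 1, …, k - 1`. -/
def weylCoeff {K : Type*} [Field K] (l : K) (k : ℕ) : K :=
  (k.factorial : K)⁻¹ * ∏ j ∈ range k, (l - j)⁻¹

/-- The operator `p(κ)` on a weight space, truncated at degree `N`; the parameter `l` is the value
of `κ + e22 - e11` there. -/
def weylSeries {K A : Type*} [Field K] [Ring A] [Algebra K A] (E F : A) (l : K) (N : ℕ) : A :=
  ∑ k ∈ range (N + 1), weylCoeff l k • (F ^ k * E ^ k)

variable {K : Type*} [Field K]

section Algebra
variable {A : Type*} [Ring A] [Algebra K A] {E F H e f h : A}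

lemma commute_weylSeries {S : A} (hE : Commute S E) (hF : Commute S F) (l : K) (N : ℕ) :
    Commute S (weylSeries E F l N) :=
  Commute.sum_right _ _ _ fun k _ => ((hF.pow_right k).mul_right (hE.pow_right k)).smul_right _

lemma pow_mul_wedge_mul_pow_eq_zero {N : ℕ} (hE : E ^ (N + 1) = 0) (hF : F ^ (N + 1) = 0) :
    F ^ N * wedge E F e f * E ^ N = 0 := by
  calc F ^ N * wedge E F e f * E ^ N = F ^ (N + 1) * e * E ^ N - F ^ N * f * E ^ (N + 1) := by
        rw [wedge, pow_succ F, pow_succ' E]; noncomm_ring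
    _ = 0 := by simp [hE, hF]

variable [CharZero K]

lemma weylCoeff_succ {l : K} {k : ℕ} (hl : l ≠ k) :
    ((k + 1 : ℕ) : K) * (l - k) * weylCoeff l (k + 1) = weylCoeff l k := by
  have hk : ((k + 1 : ℕ) : K) ≠ 0 := Nat.cast_ne_zero.mpr k.succ_ne_zero
  have hlk : l - k ≠ 0 := sub_ne_zero.mpr hl
  rw [weylCoeff, weylCoeff, prod_range_succ, Nat.factorial_succ, Nat.cast_mul]
  field_simp

lemma IsVectorOperator.pow_mul_pow_intertwine (ht : IsVectorOperator E F e f h)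
    (hT : IsVectorOperator E F E F H) (μ : K) (k : ℕ) :
    F ^ (k + 1) * E ^ (k + 1) * (μ • h + wedge E F e f)
        - (μ • h - wedge E F e f) * (F ^ (k + 1) * E ^ (k + 1))
      = 2 • (F ^ (k + 1) * wedge E F e f * E ^ (k + 1))
        + (k + 1) • (F ^ k * wedge E F e f * E ^ k * (H + ((2 * (k + 1) : ℕ) : A)))
        - (2 * (k + 1) * μ) • (F ^ k * wedge E F e f * E ^ k) := by
  have hanti := congrArg ((2 : K)⁻¹ • ·) (ht.two_nsmul_anticommutator_wedge hT k)
  simp only [← Nat.cast_smul_eq_nsmul K 2, Nat.cast_ofNat, inv_smul_smul₀ (two_ne_zero' K)] at hanti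
  calc _ = μ • ⁅F ^ (k + 1) * E ^ (k + 1), h⁆ + (F ^ (k + 1) * E ^ (k + 1) * wedge E F e f
            + wedge E F e f * (F ^ (k + 1) * E ^ (k + 1))) := by
        simp only [Ring.lie_def, mul_add, sub_mul, mul_smul_comm, smul_mul_assoc, smul_sub]
        abel
    _ = _ := by
        rw [hanti, ht.pow_mul_pow_lie_h k]
        module

end Algebra

variable [CharZero K] {V : Type*} [AddCommGroup V] [Module K V] {E F H e f h : Module.End K V}

namespace IsVectorOperator

lemma pow_mul_pow_intertwine_apply (ht : IsVectorOperator E F e f h)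
    (hT : IsVectorOperator E F E F H) {ν : K} {v : V} (hv : H v = ν • v) (μ : K) (k : ℕ) :
    (F ^ (k + 1) * E ^ (k + 1)) ((μ • h + wedge E F e f) v)
        - (μ • h - wedge E F e f) ((F ^ (k + 1) * E ^ (k + 1)) v)
      = (2 : K) • ((F ^ (k + 1) * wedge E F e f * E ^ (k + 1)) v
        - (((k + 1 : ℕ) : K) * (μ - ν / 2 - 1 - k)) • (F ^ k * wedge E F e f * E ^ k) v) := by
  have happly := LinearMap.congr_fun (ht.pow_mul_pow_intertwine hT μ k) v
  simp only [LinearMap.sub_apply, LinearMap.add_apply, LinearMap.smul_apply, Module.End.mul_apply,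
    Module.End.natCast_apply, map_add, map_smul, map_nsmul, hv] at happly ⊢
  rw [happly]
  push_cast
  module

lemma weylSeries_apply_sub (ht : IsVectorOperator E F e f h) (hT : IsVectorOperator E F E F H)
    {ν : K} {v : V} (hv : H v = ν • v) {μ l : K} (hl : l = μ - ν / 2 - 1) (N : ℕ)
    (hN : ∀ k < N, l ≠ k) :
    weylSeries E F l N ((μ • h + wedge E F e f) v)
        - (μ • h - wedge E F e f) (weylSeries E F l N v)
      = (2 * weylCoeff l N) • (F ^ N * wedge E F e f * E ^ N) v := by
  induction N with
  | zero =>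
    have hzero : weylSeries E F l 0 = 1 := by simp [weylSeries, weylCoeff]
    have hcoeff : weylCoeff l 0 = 1 := by simp [weylCoeff]
    simp only [hzero, hcoeff, pow_zero, one_mul, mul_one, Module.End.one_apply,
      LinearMap.add_apply, LinearMap.sub_apply]
    module
  | succ N ih =>
    have hsucc (w : V) : weylSeries E F l (N + 1) w
        = weylSeries E F l N w + weylCoeff l (N + 1) • (F ^ (N + 1) * E ^ (N + 1)) w := by
      rw [weylSeries, sum_range_succ]; rfl
    have hstep := ht.pow_mul_pow_intertwine_apply hT hv μ N
    have ih := ih fun k hk => hN k (hk.trans N.lt_succ_self)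
    rw [← weylCoeff_succ (hN N N.lt_succ_self)] at ih
    rw [← hl] at hstep
    rw [hsucc, hsucc, map_add, map_smul]
    linear_combination (norm := module) ih + weylCoeff l (N + 1) • hstep

theorem weylSeries_intertwine (ht : IsVectorOperator E F e f h) (hT : IsVectorOperator E F E F H)
    {S : Module.End K V} (hSE : Commute S E) (hSF : Commute S F) {N : ℕ}
    (hE : E ^ (N + 1) = 0) (hF : F ^ (N + 1) = 0)
    {ν : K} {v : V} (hv : H v = ν • v) {μ : K} (hμ : ∀ k : ℕ, k < N → μ - ν / 2 - 1 ≠ k) :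
    weylSeries E F (μ - ν / 2 - 1) N (((2 : K)⁻¹ • (μ • h + wedge E F e f) + S) v)
      = ((2 : K)⁻¹ • (μ • h - wedge E F e f) + S) (weylSeries E F (μ - ν / 2 - 1) N v) := by
  have hsub := ht.weylSeries_apply_sub hT hv rfl N hμ
  rw [pow_mul_wedge_mul_pow_eq_zero hE hF, LinearMap.zero_apply, smul_zero, sub_eq_zero] at hsub
  have hS := LinearMap.congr_fun (commute_weylSeries hSE hSF (μ - ν / 2 - 1) N).eq v
  rw [LinearMap.add_apply, LinearMap.add_apply, LinearMap.smul_apply, LinearMap.smul_apply,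
    map_add, map_smul, hsub]
  exact congrArg _ hS.symm

end IsVectorOperator
end WeylSeries

section OneSite

/-- `e12` on one tensor factor `V_N`. -/
def siteE12 (N : ℕ) : Module.End ℂ (Fin (N + 1) → ℂ) :=
  mulShift (fun k => (N : ℂ) - (k : ℕ)) (· + 1)

/-- `e21` on one tensor factor `V_N`. -/
def siteE21 (N : ℕ) : Module.End ℂ (Fin (N + 1) → ℂ) :=
  mulShift (fun k => ((k : ℕ) : ℂ)) (· - 1)

/-- `e11 - e22` on one tensor factor `V_N`. -/
def siteCartan (N : ℕ) : Module.End ℂ (Fin (N + 1) → ℂ) :=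
  mulShift (fun k => (N : ℂ) - 2 * (k : ℕ)) id

/-- The Weyl involution `σ` on one tensor factor `V_N`. -/
def siteSigma (N : ℕ) : Module.End ℂ (Fin (N + 1) → ℂ) :=
  mulShift (fun k => (-1 : ℂ) ^ (N - (k : ℕ))) Fin.rev

lemma mulShift_apply {ι : Type*} (c : ι → ℂ) (g : ι → ι) (v : ι → ℂ) (i : ι) :
    mulShift c g v i = c i * v (g i) := rfl

variable {N : ℕ}

lemma sub_val_mul_val_add_one (k : Fin (N + 1)) :
    ((N : ℂ) - (k : ℕ)) * ((k + 1 : Fin (N + 1)) : ℕ) = (N - (k : ℕ)) * ((k : ℕ) + 1) := by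
  rcases eq_or_ne k (Fin.last N) with rfl | hk
  · simp
  · rw [Fin.val_add_one_of_lt (Fin.lt_last_iff_ne_last.mpr hk), Nat.cast_succ]

lemma val_mul_val_sub_one (k : Fin (N + 1)) :
    ((k : ℕ) : ℂ) * ((k - 1 : Fin (N + 1)) : ℕ) = (k : ℕ) * ((k : ℕ) - 1) := by
  rcases eq_or_ne k 0 with rfl | hk
  · simp
  · rw [Fin.val_sub_one_of_ne_zero hk, Nat.cast_pred (Fin.pos_iff_ne_zero.mpr hk)]

lemma lie_siteE12_siteE21 : ⁅siteE12 N, siteE21 N⁆ = siteCartan N := by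
  refine LinearMap.ext fun v => funext fun k => ?_
  simp only [Ring.lie_def, LinearMap.sub_apply, Module.End.mul_apply, Pi.sub_apply, siteE12,
    siteE21, siteCartan, mulShift_apply, add_sub_cancel_right, sub_add_cancel, id]
  linear_combination v k * (sub_val_mul_val_add_one k + val_mul_val_sub_one k)

lemma lie_siteCartan_siteE12 : ⁅siteCartan N, siteE12 N⁆ = 2 • siteE12 N := by
  refine LinearMap.ext fun v => funext fun k => ?_
  simp only [Ring.lie_def, two_nsmul, LinearMap.sub_apply, LinearMap.add_apply,
    Module.End.mul_apply, Pi.sub_apply, Pi.add_apply, siteCartan, siteE12, mulShift_apply, id]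
  linear_combination 2 * v (k + 1) * sub_val_mul_val_add_one k

lemma lie_siteCartan_siteE21 : ⁅siteCartan N, siteE21 N⁆ = -(2 • siteE21 N) := by
  refine LinearMap.ext fun v => funext fun k => ?_
  simp only [Ring.lie_def, two_nsmul, LinearMap.sub_apply, LinearMap.add_apply,
    LinearMap.neg_apply, Module.End.mul_apply, Pi.sub_apply, Pi.add_apply, Pi.neg_apply,
    siteCartan, siteE21, mulShift_apply, id]
  linear_combination 2 * v (k - 1) * val_mul_val_sub_one k

lemma isVectorOperator_siteE12_siteE21 :
    IsVectorOperator (siteE12 N) (siteE21 N) (siteE12 N) (siteE21 N) (siteCartan N) :=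
  .of_sl2 lie_siteE12_siteE21 lie_siteCartan_siteE12 lie_siteCartan_siteE21

lemma siteE12_pow_apply_eq_zero (v : Fin (N + 1) → ℂ) (j : ℕ) (k : Fin (N + 1))
    (hk : N < j + k) : (siteE12 N ^ j) v k = 0 := by
  induction j generalizing k with
  | zero => omega
  | succ j ih =>
    rw [pow_succ', Module.End.mul_apply, siteE12, mulShift_apply, ← siteE12]
    rcases eq_or_ne k (Fin.last N) with rfl | hkN
    · rw [Fin.val_last, sub_self, zero_mul]
    · rw [ih, mul_zero]
      rw [Fin.val_add_one_of_lt (Fin.lt_last_iff_ne_last.mpr hkN)]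
      omega

lemma siteE21_pow_apply_eq_zero (v : Fin (N + 1) → ℂ) (j : ℕ) (k : Fin (N + 1))
    (hk : (k : ℕ) < j) : (siteE21 N ^ j) v k = 0 := by
  induction j generalizing k with
  | zero => omega
  | succ j ih =>
    rw [pow_succ', Module.End.mul_apply, siteE21, mulShift_apply, ← siteE21]
    rcases eq_or_ne k 0 with rfl | hk0
    · rw [Fin.val_zero, Nat.cast_zero, zero_mul]
    · have hk1 := Fin.pos_iff_ne_zero.mpr hk0
      rw [ih, mul_zero]
      rw [Fin.val_sub_one_of_ne_zero hk0]
      omega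

lemma siteE12_pow_succ_eq_zero : siteE12 N ^ (N + 1) = 0 :=
  LinearMap.ext fun v => funext fun k => siteE12_pow_apply_eq_zero v _ k (by omega)

lemma siteE21_pow_succ_eq_zero : siteE21 N ^ (N + 1) = 0 :=
  LinearMap.ext fun v => funext fun k => siteE21_pow_apply_eq_zero v _ k k.isLt

lemma natCast_sub_val_rev (k : Fin (N + 1)) : (N : ℂ) - (k.rev : ℕ) = (k : ℕ) := by
  rw [Fin.val_rev, Nat.add_sub_add_right, Nat.cast_sub (Fin.is_le k), sub_sub_cancel]

lemma siteSigma_semiconj_siteCartan : SemiconjBy (siteSigma N) (siteCartan N) (-siteCartan N) := by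
  refine LinearMap.ext fun v => funext fun k => ?_
  simp only [Module.End.mul_apply, LinearMap.neg_apply, Pi.neg_apply, siteSigma, siteCartan,
    mulShift_apply, id]
  linear_combination 2 * (-1) ^ (N - (k : ℕ)) * v k.rev * natCast_sub_val_rev k

lemma siteSigma_semiconj_siteE12 : SemiconjBy (siteSigma N) (siteE12 N) (-siteE21 N) := by
  refine LinearMap.ext fun v => funext fun k => ?_
  simp only [Module.End.mul_apply, LinearMap.neg_apply, Pi.neg_apply, siteSigma, siteE12, siteE21,
    mulShift_apply, natCast_sub_val_rev, Fin.rev_sub]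
  rcases eq_or_ne k 0 with rfl | hk
  · simp
  · have hk0 := Fin.pos_iff_ne_zero.mpr hk
    have hsign : N - ((k - 1 : Fin (N + 1)) : ℕ) = N - (k : ℕ) + 1 := by
      rw [Fin.val_sub_one_of_ne_zero hk]; omega
    rw [hsign, pow_succ]
    ring

lemma siteSigma_semiconj_siteE21 : SemiconjBy (siteSigma N) (siteE21 N) (-siteE12 N) := by
  refine LinearMap.ext fun v => funext fun k => ?_
  have hrev : ((k.rev : ℕ) : ℂ) = N - (k : ℕ) := by
    rw [← natCast_sub_val_rev k.rev, Fin.rev_rev]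
  simp only [Module.End.mul_apply, LinearMap.neg_apply, Pi.neg_apply, siteSigma, siteE12, siteE21,
    mulShift_apply, hrev, Fin.rev_add]
  rcases eq_or_ne k (Fin.last N) with rfl | hk
  · simp
  · have hkN := Fin.lt_last_iff_ne_last.mpr hk
    have hsign : N - (k : ℕ) = N - ((k + 1 : Fin (N + 1)) : ℕ) + 1 := by
      rw [Fin.val_add_one_of_lt hkN]; omega
    rw [hsign, pow_succ]
    ring

end OneSite

section OnSite

/-- The operator acting by `T` in the `s`-th tensor factor. -/
def onSite (s : Fin n) : Module.End ℂ (Fin (m s + 1) → ℂ) →ₐ[ℂ] Module.End ℂ (TV m) where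
  toFun T :=
    { toFun := fun v i => T (fun k => v (Function.update i s k)) (i s)
      map_add' := fun v w => funext fun i => congrFun (map_add T _ _) (i s)
      map_smul' := fun c v => funext fun i => congrFun (map_smul T c _) (i s) }
  map_one' := by ext; simp
  map_mul' T T' := by ext; simp
  map_zero' := rfl
  map_add' _ _ := rfl
  commutes' c := by ext; simp

variable {m}

lemma onSite_apply {s : Fin n} (T : Module.End ℂ (Fin (m s + 1) → ℂ)) (v : TV m) (i : Idx m) :
    onSite m s T v i = T (fun k => v (Function.update i s k)) (i s) := rfl

lemma exists_apply_eq_sum {ι : Type*} [Fintype ι] (T : Module.End ℂ (ι → ℂ)) (i : ι) :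
    ∃ a : ι → ℂ, ∀ v, T v i = ∑ k, v k * a k := by
  classical
  refine ⟨fun k => T (fun j => if k = j then 1 else 0) i, fun v => ?_⟩
  exact (congrFun (T.pi_apply_eq_sum_univ v) i).trans (Finset.sum_apply i univ _)

lemma commute_onSite {s t : Fin n} (hst : s ≠ t) (T : Module.End ℂ (Fin (m s + 1) → ℂ))
    (T' : Module.End ℂ (Fin (m t + 1) → ℂ)) : Commute (onSite m s T) (onSite m t T') := by
  refine LinearMap.ext fun v => funext fun i => ?_
  obtain ⟨a, ha⟩ := exists_apply_eq_sum T (i s)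
  obtain ⟨b, hb⟩ := exists_apply_eq_sum T' (i t)
  simp only [Module.End.mul_apply, onSite_apply, Function.update_of_ne hst,
    Function.update_of_ne hst.symm, ha, hb, sum_mul]
  rw [sum_comm]
  refine sum_congr rfl fun l _ => sum_congr rfl fun k _ => ?_
  rw [Function.update_comm hst, mul_right_comm]

lemma lie_sum_onSite (X : ∀ t, Module.End ℂ (Fin (m t + 1) → ℂ)) {s : Fin n}
    (T : Module.End ℂ (Fin (m s + 1) → ℂ)) :
    ⁅∑ t, onSite m t (X t), onSite m s T⁆ = onSite m s ⁅X s, T⁆ := by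
  rw [sum_lie, sum_eq_single s (fun t _ hts => (commute_onSite hts _ _).lie_eq) (by simp)]
  simp only [Ring.lie_def, map_sub, map_mul]

lemma IsVectorOperator.onSite {X Y : ∀ t, Module.End ℂ (Fin (m t + 1) → ℂ)} {s : Fin n}
    {e f h : Module.End ℂ (Fin (m s + 1) → ℂ)} (ht : IsVectorOperator (X s) (Y s) e f h) :
    IsVectorOperator (∑ t, onSite m t (X t)) (∑ t, onSite m t (Y t))
      (onSite m s e) (onSite m s f) (onSite m s h) where
  lie_E_e := by rw [lie_sum_onSite, ht.lie_E_e, map_zero]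
  lie_E_f := by rw [lie_sum_onSite, ht.lie_E_f]
  lie_E_h := by rw [lie_sum_onSite, ht.lie_E_h, map_neg, map_nsmul]
  lie_F_e := by rw [lie_sum_onSite, ht.lie_F_e, map_neg]
  lie_F_f := by rw [lie_sum_onSite, ht.lie_F_f, map_zero]
  lie_F_h := by rw [lie_sum_onSite, ht.lie_F_h, map_nsmul]

lemma sum_onSite_pow_eq_zero {X : ∀ t, Module.End ℂ (Fin (m t + 1) → ℂ)}
    (hX : ∀ t, X t ^ (m t + 1) = 0) : (∑ t, onSite m t (X t)) ^ (∑ t, m t + 1) = 0 :=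
  sum_pow_eq_zero (fun _ _ hst => commute_onSite hst _ _)
    (fun t => by rw [← map_pow, hX, map_zero]) univ

lemma sigmaOp_apply_update (v : TV m) (i : Idx m) (s : Fin n) (k : Fin (m s + 1)) :
    sigmaOp m v (Function.update i s k)
      = (∏ t ∈ univ.erase s, (-1) ^ (m t - (i t : ℕ)))
        * siteSigma (m s) (fun l => v (Function.update (fun t => (i t).rev) s l)) k := by
  have hrev : (fun t => (Function.update i s k t).rev)
      = Function.update (fun t => (i t).rev) s k.rev :=
    funext fun t => Function.apply_update (fun _ => Fin.rev) i s k t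
  have hprod : ∏ t ∈ univ.erase s, (-1 : ℂ) ^ (m t - (Function.update i s k t : ℕ))
      = ∏ t ∈ univ.erase s, (-1) ^ (m t - (i t : ℕ)) :=
    prod_congr rfl fun t ht => by rw [Function.update_of_ne (ne_of_mem_erase ht)]
  rw [sigmaOp, siteSigma, mulShift_apply, mulShift_apply, hrev, ← mul_prod_erase _ _ (mem_univ s),
    hprod, Function.update_self]
  ring

lemma sigmaOp_semiconj_onSite {s : Fin n} {T T' : Module.End ℂ (Fin (m s + 1) → ℂ)}
    (hT : SemiconjBy (siteSigma (m s)) T T') :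
    SemiconjBy (sigmaOp m) (onSite m s T) (onSite m s T') := by
  refine LinearMap.ext fun v => funext fun i => ?_
  let w (k : Fin (m s + 1)) : ℂ := v (Function.update (fun t => (i t).rev) s k)
  let P : ℂ := ∏ t ∈ univ.erase s, (-1) ^ (m t - (i t : ℕ))
  calc sigmaOp m (onSite m s T v) i = P * siteSigma (m s) (T w) (i s) := by
        rw [← Function.update_eq_self s i, sigmaOp_apply_update]
        simp [onSite_apply, w, P]
    _ = P * T' (siteSigma (m s) w) (i s) := by
        rw [← Module.End.mul_apply, hT.eq, Module.End.mul_apply]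
    _ = onSite m s T' (sigmaOp m v) i := by
        simp only [onSite_apply, sigmaOp_apply_update]
        exact (congrFun (map_smul T' P _) (i s)).symm

end OnSite

section Gaudin

/-- The Cartan element `e11 - e22` acting in the `s`-th tensor factor. -/
def cartan (s : Fin n) : Module.End ℂ (TV m) := E11 m s - E22 m s

lemma E12_eq_onSite (s : Fin n) : E12 m s = onSite m s (siteE12 (m s)) := rfl

lemma E21_eq_onSite (s : Fin n) : E21 m s = onSite m s (siteE21 (m s)) := rfl

lemma cartan_eq_onSite (s : Fin n) : cartan m s = onSite m s (siteCartan (m s)) := by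
  refine LinearMap.ext fun v => funext fun i => ?_
  rw [cartan, E11, E22, LinearMap.sub_apply, Pi.sub_apply, mulShift_apply, mulShift_apply,
    onSite_apply, siteCartan, mulShift_apply, id, id, Function.update_eq_self]
  ring

lemma E11_eq_smul_cartan (s : Fin n) : E11 m s = (2 : ℂ)⁻¹ • cartan m s := by
  refine LinearMap.ext fun v => funext fun i => ?_
  simp only [cartan, E11, E22, LinearMap.smul_apply, LinearMap.sub_apply, Pi.smul_apply,
    Pi.sub_apply, mulShift_apply, smul_eq_mul, id]
  ring

lemma E22_eq_neg_E11 (s : Fin n) : E22 m s = -E11 m s :=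
  LinearMap.ext fun _ => funext fun _ => neg_mul _ _

lemma isVectorOperator_E12_E21 (s : Fin n) :
    IsVectorOperator (e12T m) (e21T m) (E12 m s) (E21 m s) (cartan m s) := by
  rw [cartan_eq_onSite]
  exact IsVectorOperator.onSite (X := fun t => siteE12 (m t)) (Y := fun t => siteE21 (m t))
    isVectorOperator_siteE12_siteE21

lemma e11T_sub_e22T : e11T m - e22T m = ∑ s, cartan m s := (sum_sub_distrib _ _).symm

lemma isVectorOperator_e12T_e21T :
    IsVectorOperator (e12T m) (e21T m) (e12T m) (e21T m) (e11T m - e22T m) := by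
  rw [e11T_sub_e22T]
  exact .sum fun s _ => isVectorOperator_E12_E21 m s

lemma e12T_pow_eq_zero : e12T m ^ (∑ s, m s + 1) = 0 :=
  sum_onSite_pow_eq_zero fun _ => siteE12_pow_succ_eq_zero

lemma e21T_pow_eq_zero : e21T m ^ (∑ s, m s + 1) = 0 :=
  sum_onSite_pow_eq_zero fun _ => siteE21_pow_succ_eq_zero

lemma e11T_sub_e22T_apply (v : TV m) (i : Idx m) : (e11T m - e22T m) v i = (wt m i : ℂ) * v i := by
  rw [e11T_sub_e22T, LinearMap.sum_apply, Finset.sum_apply, wt, Int.cast_sum, sum_mul]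
  refine sum_congr rfl fun s _ => ?_
  rw [cartan_eq_onSite, onSite_apply, siteCartan, mulShift_apply, id, Function.update_eq_self]
  push_cast
  rfl

variable {m} in
lemma pOp_apply_of_inWt {ν : ℤ} {v : TV m} (hv : inWt m ν v) (κ : ℂ) :
    pOp m κ v = weylSeries (e12T m) (e21T m) (κ - ν) (∑ s, m s) v := by
  rw [pOp, weylSeries, LinearMap.sum_apply, LinearMap.sum_apply]
  refine sum_congr rfl fun k _ => ?_
  rw [Module.End.mul_apply, LinearMap.smul_apply, ← map_smul]
  congr 1
  funext i
  rw [mulShift_apply, Pi.smul_apply, smul_eq_mul, id]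
  by_cases hvi : v i = 0
  · rw [hvi, mul_zero, mul_zero]
  · have hwt : (wt m i : ℂ) * v i = ν * v i := by
      rw [← e11T_sub_e22T_apply, hv, Pi.smul_apply, smul_eq_mul]
    rw [mul_right_cancel₀ hvi hwt, weylCoeff]

lemma sigmaOp_semiconj_E12 (s : Fin n) : SemiconjBy (sigmaOp m) (E12 m s) (-E21 m s) := by
  rw [E12_eq_onSite, E21_eq_onSite, ← map_neg]
  exact sigmaOp_semiconj_onSite siteSigma_semiconj_siteE12

lemma sigmaOp_semiconj_E21 (s : Fin n) : SemiconjBy (sigmaOp m) (E21 m s) (-E12 m s) := by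
  rw [E12_eq_onSite, E21_eq_onSite, ← map_neg]
  exact sigmaOp_semiconj_onSite siteSigma_semiconj_siteE21

lemma sigmaOp_semiconj_cartan (s : Fin n) : SemiconjBy (sigmaOp m) (cartan m s) (-cartan m s) := by
  rw [cartan_eq_onSite, ← map_neg]
  exact sigmaOp_semiconj_onSite siteSigma_semiconj_siteCartan

lemma sigmaOp_semiconj_e12T : SemiconjBy (sigmaOp m) (e12T m) (-e21T m) := by
  rw [e12T, e21T, ← sum_neg_distrib]
  exact semiconjBy_sum_right (sigmaOp_semiconj_E12 m) univ

lemma sigmaOp_semiconj_e21T : SemiconjBy (sigmaOp m) (e21T m) (-e12T m) := by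
  rw [e12T, e21T, ← sum_neg_distrib]
  exact semiconjBy_sum_right (sigmaOp_semiconj_E21 m) univ

/-- `wedge` of the diagonal `sl₂`-action and its `s`-th tensor factor. -/
def siteWedge (s : Fin n) : Module.End ℂ (TV m) :=
  wedge (e12T m) (e21T m) (E12 m s) (E21 m s)

/-- Twice the Casimir tensor `½ h ⊗ h + e12 ⊗ e21 + e21 ⊗ e12` in the factors `s` and `t`. -/
def siteCasimir (s t : Fin n) : Module.End ℂ (TV m) :=
  casimir (E12 m s) (E21 m s) (cartan m s) (E12 m t) (E21 m t) (cartan m t)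

lemma siteWedge_eq_sum (s : Fin n) :
    siteWedge m s = ∑ t ∈ univ.erase s, (E12 m s * E21 m t - E21 m s * E12 m t) := by
  have hswap {t : Fin n} (ht : t ∈ univ.erase s) : E21 m t * E12 m s = E12 m s * E21 m t :=
    (commute_onSite (ne_of_mem_erase ht) (siteE21 (m t)) (siteE12 (m s))).eq
  rw [siteWedge, wedge, e21T, e12T, sum_mul, mul_sum, ← sum_sub_distrib,
    ← add_sum_erase _ _ (mem_univ s), sub_self, zero_add]
  exact sum_congr rfl fun t ht => by rw [hswap ht]

lemma rOp_eq (s t : Fin n) {x : ℂ} (hx : x ≠ 1) :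
    rOp m s t x = ((x + 1) / (4 * (x - 1))) • siteCasimir m s t
      + (2 : ℂ)⁻¹ • (E12 m s * E21 m t - E21 m s * E12 m t) := by
  have hx1 : x - 1 ≠ 0 := sub_ne_zero.mpr hx
  have hOm0 : Om0 m s t = (2 : ℂ)⁻¹ • (cartan m s * cartan m t) := by
    have hE22 : E22 m s * E22 m t = E11 m s * E11 m t := by
      rw [E22_eq_neg_E11, E22_eq_neg_E11]
      exact neg_mul_neg (E11 m s) (E11 m t)
    rw [Om0, hE22, E11_eq_smul_cartan, E11_eq_smul_cartan, smul_mul_smul_comm]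
    module
  rw [rOp, hOm0, Om12, Om21, siteCasimir, casimir]
  match_scalars <;> field_simp <;> ring

/-- The part of `K_s(z,μ)` that commutes with the diagonal `sl₂`-action. -/
def gaudinCasimir (z : Fin n → ℂ) (s : Fin n) : Module.End ℂ (TV m) :=
  ∑ t ∈ univ.erase s, ((z s / z t + 1) / (4 * (z s / z t - 1))) • siteCasimir m s t

variable {z : Fin n → ℂ}

lemma Kop_eq {s : Fin n} (hz : ∀ t ≠ s, z s / z t ≠ 1) (μ : ℂ) :
    Kop m z μ s = (2 : ℂ)⁻¹ • (μ • cartan m s + siteWedge m s) + gaudinCasimir m z s := by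
  have hr : ∑ t ∈ univ.erase s, rOp m s t (z s / z t)
      = gaudinCasimir m z s + (2 : ℂ)⁻¹ • siteWedge m s := by
    rw [siteWedge_eq_sum, smul_sum, gaudinCasimir, ← sum_add_distrib]
    exact sum_congr rfl fun t ht => rOp_eq m s t (hz t (ne_of_mem_erase ht))
  rw [Kop, hr, ← cartan]
  module

variable (z) (s : Fin n)

lemma gaudinCasimir_commute_e12T : Commute (gaudinCasimir m z s) (e12T m) :=
  Commute.sum_left _ _ _ fun t _ =>
    ((isVectorOperator_E12_E21 m s).casimir_commute_left
      (isVectorOperator_E12_E21 m t)).symm.smul_left _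

lemma gaudinCasimir_commute_e21T : Commute (gaudinCasimir m z s) (e21T m) :=
  Commute.sum_left _ _ _ fun t _ =>
    ((isVectorOperator_E12_E21 m s).casimir_commute_right
      (isVectorOperator_E12_E21 m t)).symm.smul_left _

lemma sigmaOp_semiconj_siteWedge : SemiconjBy (sigmaOp m) (siteWedge m s) (-siteWedge m s) := by
  rw [siteWedge, ← (isVectorOperator_E12_E21 m s).wedge_swap]
  exact semiconjBy_wedge (sigmaOp_semiconj_e12T m) (sigmaOp_semiconj_e21T m)
    (sigmaOp_semiconj_E12 m s) (sigmaOp_semiconj_E21 m s)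

lemma sigmaOp_commute_siteCasimir (t : Fin n) : Commute (sigmaOp m) (siteCasimir m s t) :=
  commute_casimir (sigmaOp_semiconj_E12 m s) (sigmaOp_semiconj_E21 m s)
    (sigmaOp_semiconj_cartan m s) (sigmaOp_semiconj_E12 m t) (sigmaOp_semiconj_E21 m t)
    (sigmaOp_semiconj_cartan m t)

lemma sigmaOp_commute_gaudinCasimir : Commute (sigmaOp m) (gaudinCasimir m z s) :=
  Commute.sum_right _ _ _ fun t _ => (sigmaOp_commute_siteCasimir m s t).smul_right _

lemma sigmaOp_semiconj_gaudin (μ : ℂ) :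
    SemiconjBy (sigmaOp m) ((2 : ℂ)⁻¹ • (μ • cartan m s - siteWedge m s) + gaudinCasimir m z s)
      ((2 : ℂ)⁻¹ • (-μ • cartan m s + siteWedge m s) + gaudinCasimir m z s) := by
  have h := ((((sigmaOp_semiconj_cartan m s).smul_right μ).sub_right
    (sigmaOp_semiconj_siteWedge m s)).smul_right (2 : ℂ)⁻¹).add_right
    (sigmaOp_commute_gaudinCasimir m z s)
  rwa [sub_neg_eq_add, smul_neg, ← neg_smul] at h

variable {m z s}

lemma commute_e11T_sub_e22T_Kop (hz : ∀ t ≠ s, z s / z t ≠ 1) (μ : ℂ) :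
    Commute (e11T m - e22T m) (Kop m z μ s) := by
  have hT := isVectorOperator_e12T_e21T m
  have ht := isVectorOperator_E12_E21 m s
  have hS : Commute (e11T m - e22T m) (gaudinCasimir m z s) := by
    rw [← hT.lie_E_f]
    have hE := gaudinCasimir_commute_e12T m z s
    have hF := gaudinCasimir_commute_e21T m z s
    exact ((hE.mul_right hF).sub_right (hF.mul_right hE)).symm
  rw [Kop_eq m hz]
  exact ((((ht.commute_H_h hT).smul_right μ).add_right
    (ht.commute_H_wedge hT)).smul_right _).add_right hS

lemma inWt_Kop {ν : ℤ} {v : TV m} (hv : inWt m ν v) (hz : ∀ t ≠ s, z s / z t ≠ 1) (μ : ℂ) :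
    inWt m ν (Kop m z μ s v) := by
  rw [inWt, ← Module.End.mul_apply, (commute_e11T_sub_e22T_Kop hz μ).eq, Module.End.mul_apply, hv,
    map_smul]

end Gaudin

lemma sub_half_sub_one_ne_natCast {M : ℕ} {μ : ℂ} (hμ : ∀ k : ℤ, μ ≠ M / 2 + k)
    {ν : ℤ} (hν : 2 ∣ (M : ℤ) - ν) (k : ℕ) : μ - ν / 2 - 1 ≠ k := by
  obtain ⟨j, hj⟩ := hν
  have hj : (M : ℂ) - ν = 2 * j := by exact_mod_cast hj
  intro h
  apply hμ (1 + k - j)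
  push_cast
  linear_combination h - hj / 2

theorem statement3_general {m : Fin n → ℕ} {μ : ℂ} {ν : ℤ}
    (hμ : ∀ k : ℕ, k < ∑ s, m s → μ - ν / 2 - 1 ≠ k) {z : Fin n → ℂ} (hz0 : ∀ s, z s ≠ 0)
    (hz : Function.Injective z) (s : Fin n) {v : TV m} (hv : inWt m ν v) :
    Aop m (μ + ν / 2 - 1) (Kop m z μ s v) = Kop m z (-μ) s (Aop m (μ + ν / 2 - 1) v) := by
  have hzs (t : Fin n) (ht : t ≠ s) : z s / z t ≠ 1 := by
    rw [Ne, div_eq_one_iff_eq (hz0 t)]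
    exact fun h => ht (hz h).symm
  have hκ : μ + ν / 2 - 1 - ν = μ - ν / 2 - 1 := by ring
  have hseries := (isVectorOperator_E12_E21 m s).weylSeries_intertwine
    (isVectorOperator_e12T_e21T m)
    (gaudinCasimir_commute_e12T m z s) (gaudinCasimir_commute_e21T m z s)
    (e12T_pow_eq_zero m) (e21T_pow_eq_zero m) hv hμ
  have hsigma := LinearMap.congr_fun (sigmaOp_semiconj_gaudin m z s μ).eq
  rw [Aop, Module.End.mul_apply, Module.End.mul_apply, pOp_apply_of_inWt (inWt_Kop hv hzs μ),
    pOp_apply_of_inWt hv, hκ, Kop_eq m hzs, Kop_eq m hzs]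
  exact (congrArg (sigmaOp m) hseries).trans (hsigma _)

/-- Lemma 4.4 of the paper.  For `μ ∉ M/2 + ℤ`, `ν ≡ M (mod 2)`, and
pairwise distinct nonzero `z_1,…,z_n`, for every `s` and every `v ∈ V[ν]`:
`𝒜(μ + ν/2 - 1) K_s(z,μ) v = K_s(z,-μ) 𝒜(μ + ν/2 - 1) v`. -/
theorem statement3
    (n : ℕ) (hn : 1 < n) (m : Fin n → ℕ) (hm : ∀ s, 0 < m s)
    (M : ℕ) (hM : M = ∑ s, m s)
    (μ : ℂ) (hμ : ∀ k : ℤ, μ ≠ (M : ℂ) / 2 + (k : ℂ))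
    (ν : ℤ) (hν : (2 : ℤ) ∣ ((M : ℤ) - ν))
    (z : Fin n → ℂ) (hz0 : ∀ s, z s ≠ 0) (hz : Function.Injective z) :
    ∀ s : Fin n, ∀ v : TV m, inWt m ν v →
      Aop m (μ + (ν : ℂ) / 2 - 1) (Kop m z μ s v)
        = Kop m z (-μ) s (Aop m (μ + (ν : ℂ) / 2 - 1) v) := by
  intro s v hv
  exact statement3_general (fun k _ => sub_half_sub_one_ne_natCast hμ hν k) hz0 hz s hv


end
end Paper
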